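/- Equip Λ²ℤ⁴ with the symmetric bilinear form b(x,y) := x ∧ y ∈ Λ⁴ℤ⁴ ≅ ℤ, which makes it an even unimodular lattice of signature (3,3) isometric to U³. Then the image of SL₄(ℤ) under the second exterior power homomorphism λ : SL₄(ℤ) → O(Λ²ℤ⁴, b), λ(ψ) = Λ²ψ, is exactly SO^+(Λ²ℤ⁴, b). -/

import Mathlib

open Matrix

/-- The ℝ-bilinear extension of the integral bilinear form with Gram matrix `M`. -/
def bilinR {ι : Type*} [Fintype ι] (M : Matrix ι ι ℤ) (x y : ι → ℝ) : ℝ :=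
  x ⬝ᵥ ((M.map (Int.cast : ℤ → ℝ)) *ᵥ y)

/-- `w` is a tuple of vectors of `L ⊗ ℝ` spanning a maximal positive definite subspace:
its Gram matrix is positive definite and no longer tuple has positive definite Gram matrix. -/
def IsMaxPosTuple {ι : Type*} [Fintype ι] (M : Matrix ι ι ℤ) {k : ℕ}
    (w : Fin k → ι → ℝ) : Prop :=
  (Matrix.of fun i j => bilinR M (w i) (w j)).PosDef ∧
    ∀ w' : Fin (k + 1) → ι → ℝ,
      ¬ (Matrix.of fun i j => bilinR M (w' i) (w' j)).PosDef

/-- `g` preserves the orientation of the positive cone of the lattice with Gram matrix `M`: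
for every basis `w` of a maximal positive definite subspace `W` of `L ⊗ ℝ`, the determinant of
the matrix `(B(wᵢ, g wⱼ))` (which equals, up to the positive factor `det (Gram w)`, the
determinant of the orthogonal projection of `g|_W` back to `W`) is positive. -/
def OrientPres {ι : Type*} [Fintype ι] (M : Matrix ι ι ℤ) (g : Matrix ι ι ℤ) : Prop :=
  ∀ (k : ℕ) (w : Fin k → ι → ℝ), IsMaxPosTuple M w →
    0 < (Matrix.of fun i j : Fin k =>
          bilinR M (w i) ((g.map (Int.cast : ℤ → ℝ)) *ᵥ w j)).det

/-- `g` is an isometry of the lattice with Gram matrix `M`. -/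
def IsIsometry {ι : Type*} [Fintype ι] (M : Matrix ι ι ℤ) (g : Matrix ι ι ℤ) : Prop :=
  gᵀ * M * g = M

/-- A vector of a lattice is primitive if it is divisible only by units. -/
def IsPrimitiveVec {ι : Type*} (l : ι → ℤ) : Prop :=
  ∀ (c : ℤ) (x : ι → ℤ), l = c • x → IsUnit c

/-- First members of the six index pairs `(0,1),(0,2),(0,3),(1,2),(1,3),(2,3)` indexing the
standard basis `eᵢ ∧ eⱼ` (i < j) of `Λ²ℤ⁴`. -/
def pfst : Fin 6 → Fin 4 := ![0, 0, 0, 1, 1, 2]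

/-- Second members of the six index pairs indexing the standard basis of `Λ²ℤ⁴`. -/
def psnd : Fin 6 → Fin 4 := ![1, 2, 3, 2, 3, 3]

/-- The second exterior power `Λ²ψ` of a `4×4` integral matrix, in the standard basis
`eᵢ ∧ eⱼ` (i < j) of `Λ²ℤ⁴`: its entries are the `2×2` minors of `ψ`. -/
def lam2 (ψ : Matrix (Fin 4) (Fin 4) ℤ) : Matrix (Fin 6) (Fin 6) ℤ :=
  Matrix.of fun I J =>
    ψ (pfst I) (pfst J) * ψ (psnd I) (psnd J) - ψ (pfst I) (psnd J) * ψ (psnd I) (pfst J)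

/-- The Gram matrix of the symmetric bilinear form `b(x,y) = x ∧ y ∈ Λ⁴ℤ⁴ ≅ ℤ` on `Λ²ℤ⁴`,
in the standard basis `eᵢ ∧ eⱼ` (i < j), where `Λ⁴ℤ⁴` is identified with `ℤ` via the
generator `e₀ ∧ e₁ ∧ e₂ ∧ e₃`. -/
def G6 : Matrix (Fin 6) (Fin 6) ℤ :=
  !![0,0,0,0,0,1;
     0,0,0,0,-1,0;
     0,0,0,1,0,0;
     0,0,1,0,0,0;
     0,-1,0,0,0,0;
     1,0,0,0,0,0]

/-!
The sign of the orthogonal projection from a positive definite 3-space to the self-dual bivectors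
is an orientation of it, and it is this sign that an isometry of `Λ²ℝ⁴` either preserves or
reverses. For positive definite 3-spaces `U` and `V`, the segment from the product of their
self-dual projections to their Gram matrix avoids the singular matrices, so `det (uᵢ ∧ vⱼ)` has
the sign of the product of the two orientations. The orientation character is therefore
multiplicative on isometries and trivial on squares; a transvection is a square, and for a
diagonal matrix the character is computed, so Gaussian elimination puts `Λ²(SL₄(ℝ))` inside
`SO⁺`.

Conversely, given an integral isometry `g`, the Euclidean algorithm carried out by copies of
`SL₂` in `SL₄` moves the images of `e₀₁, e₂₃, e₀₂, e₁₃` back one after the other. What remains is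
an isometry of the hyperbolic plane `⟨e₀₃, e₁₂⟩`, of which there are four, and only the identity
has determinant `1` and preserves the orientation.
-/

section GramIsometries

variable {ι R : Type*} [Fintype ι] [CommRing R] {M g : Matrix ι ι R}

theorem gram_mul_isometry {κ : Type*} (hg : gᵀ * M * g = M) (U V : Matrix κ ι R) :
    U * gᵀ * M * (V * gᵀ)ᵀ = U * M * Vᵀ := by
  rw [transpose_mul, transpose_transpose]
  calc U * gᵀ * M * (g * Vᵀ) = U * (gᵀ * M * g) * Vᵀ := by simp only [Matrix.mul_assoc]
    _ = U * M * Vᵀ := by rw [hg]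

theorem of_mulVec {κ : Type*} (g : Matrix ι ι R) (w : κ → ι → R) :
    (of fun i => g *ᵥ w i) = of w * gᵀ := by
  ext i j
  simp only [of_apply, mulVec, mul_apply, dotProduct, transpose_apply, mul_comm]

theorem dotProduct_mulVec_isometry (hg : gᵀ * M * g = M) (x y : ι → R) :
    (g *ᵥ x) ⬝ᵥ (M *ᵥ (g *ᵥ y)) = x ⬝ᵥ (M *ᵥ y) := by
  conv_rhs => rw [← hg]
  simp only [← mulVec_mulVec]
  rw [mulVec_transpose, dotProduct_comm x, ← dotProduct_mulVec, dotProduct_comm]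

variable [DecidableEq ι]

/-- The monoid of isometries of the bilinear form with Gram matrix `M` over a commutative ring. -/
def gramIsometries (M : Matrix ι ι R) : Submonoid (Matrix ι ι R) where
  carrier := {g | gᵀ * M * g = M}
  one_mem' := by simp
  mul_mem' {g h} hg hh := by
    calc (g * h)ᵀ * M * (g * h) = hᵀ * (gᵀ * M * g) * h := by
          simp only [transpose_mul, Matrix.mul_assoc]
      _ = M := by rw [hg, hh]

theorem mem_gramIsometries : g ∈ gramIsometries M ↔ gᵀ * M * g = M := Iff.rfl

theorem det_mul_self_of_mem_gramIsometries (hM : IsUnit M.det) (hg : g ∈ gramIsometries M) :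
    g.det * g.det = 1 := by
  have hdet := congrArg det (mem_gramIsometries.1 hg)
  rw [det_mul, det_mul, det_transpose] at hdet
  exact hM.mul_right_cancel (by linear_combination hdet)

end GramIsometries

section PositiveDefinite

variable {κ π ν : Type*} [Fintype π] [Fintype ν]

theorem posDef_mul_transpose_of_posDef_sub [Finite κ] {P : Matrix κ π ℝ} {N : Matrix κ ν ℝ}
    (h : (P * Pᵀ - N * Nᵀ).PosDef) : (P * Pᵀ).PosDef := by
  have hN : (N * Nᵀ).PosSemidef := posSemidef_self_mul_conjTranspose N
  simpa using h.add_posSemidef hN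

variable [Fintype κ]

theorem dotProduct_vecMul_lt_of_posDef_sub {P : Matrix κ π ℝ} {N : Matrix κ ν ℝ}
    (h : (P * Pᵀ - N * Nᵀ).PosDef) {c : κ → ℝ} (hc : c ≠ 0) :
    (c ᵥ* N) ⬝ᵥ (c ᵥ* N) < (c ᵥ* P) ⬝ᵥ (c ᵥ* P) := by
  have hpos := h.dotProduct_mulVec_pos hc
  simpa only [star_trivial, sub_mulVec, dotProduct_sub, ← mulVec_mulVec, mulVec_transpose,
    dotProduct_mulVec, sub_pos] using hpos

theorem card_le_card_of_posDef_sub {P : Matrix κ π ℝ} {N : Matrix κ ν ℝ}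
    (h : (P * Pᵀ - N * Nᵀ).PosDef) : Fintype.card κ ≤ Fintype.card π := by
  classical
  rw [← rank_of_isUnit _ (posDef_mul_transpose_of_posDef_sub h).isUnit, rank_self_mul_transpose]
  exact rank_le_card_width P

variable [DecidableEq κ] {P Q : Matrix κ κ ℝ} {N M : Matrix κ ν ℝ}

theorem det_ne_zero_of_posDef_sub (h : (P * Pᵀ - N * Nᵀ).PosDef) : P.det ≠ 0 := by
  have hdet := (posDef_mul_transpose_of_posDef_sub h).det_pos
  rw [det_mul] at hdet
  exact left_ne_zero_of_mul hdet.ne'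

theorem det_mul_transpose_sub_smul_ne_zero (hPN : (P * Pᵀ - N * Nᵀ).PosDef)
    (hQM : (Q * Qᵀ - M * Mᵀ).PosDef) {t : ℝ} (ht : t ∈ Set.Icc (0 : ℝ) 1) :
    (P * Qᵀ - t • (N * Mᵀ)).det ≠ 0 := by
  intro hdet
  obtain ⟨c, hc, hker⟩ := exists_vecMul_eq_zero_iff.mpr hdet
  have hQ : IsUnit Q.det := (det_ne_zero_of_posDef_sub hQM).isUnit
  obtain ⟨d, hd⟩ : ∃ d, d ᵥ* Q = c ᵥ* P :=
    ⟨(c ᵥ* P) ᵥ* Q⁻¹, by rw [vecMul_vecMul, nonsing_inv_mul _ hQ, vecMul_one]⟩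
  have hcN := dotProduct_vecMul_lt_of_posDef_sub hPN hc
  have hcN_nonneg : 0 ≤ (c ᵥ* N) ⬝ᵥ (c ᵥ* N) := dotProduct_self_star_nonneg _
  have hd0 : d ≠ 0 := by
    rintro rfl
    rw [← hd, zero_vecMul, zero_dotProduct] at hcN
    exact hcN.not_ge hcN_nonneg
  have hdM := dotProduct_vecMul_lt_of_posDef_sub hQM hd0
  rw [hd] at hdM
  have hpair : (c ᵥ* P) ⬝ᵥ (c ᵥ* P) = t * ((c ᵥ* N) ⬝ᵥ (d ᵥ* M)) := by
    have hzero := congrArg (· ⬝ᵥ d) hker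
    simp only [vecMul_sub, vecMul_smul, sub_dotProduct, smul_dotProduct, zero_dotProduct,
      ← vecMul_vecMul, smul_eq_mul, ← dotProduct_mulVec, mulVec_transpose, hd] at hzero
    simpa only [dotProduct_mulVec, sub_eq_zero] using hzero
  have hamgm : 2 * ((c ᵥ* N) ⬝ᵥ (d ᵥ* M)) ≤
      (c ᵥ* N) ⬝ᵥ (c ᵥ* N) + (d ᵥ* M) ⬝ᵥ (d ᵥ* M) := by
    have hsq : 0 ≤ (c ᵥ* N - d ᵥ* M) ⬝ᵥ (c ᵥ* N - d ᵥ* M) := dotProduct_self_star_nonneg _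
    simp only [sub_dotProduct, dotProduct_sub, dotProduct_comm (d ᵥ* M) (c ᵥ* N)] at hsq
    linarith
  nlinarith [ht.1, ht.2]

/-- The segment from `P * Qᵀ` to `P * Qᵀ - N * Mᵀ` never meets the singular matrices. -/
theorem sign_det_mul_transpose_sub (hPN : (P * Pᵀ - N * Nᵀ).PosDef)
    (hQM : (Q * Qᵀ - M * Mᵀ).PosDef) :
    SignType.sign (P * Qᵀ - N * Mᵀ).det = SignType.sign P.det * SignType.sign Q.det := by
  let f : ℝ → ℝ := fun t => (P * Qᵀ).det * (P * Qᵀ - t • (N * Mᵀ)).det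
  have hf : Continuous f := by fun_prop
  have hPQ : (P * Qᵀ).det ≠ 0 := by
    simpa using det_mul_transpose_sub_smul_ne_zero hPN hQM (Set.left_mem_Icc.2 zero_le_one)
  have hne : ∀ t ∈ Set.Icc (0 : ℝ) 1, f t ≠ 0 := fun t ht =>
    mul_ne_zero hPQ (det_mul_transpose_sub_smul_ne_zero hPN hQM ht)
  have hf0 : 0 < f 0 := by simpa [f] using mul_self_pos.2 hPQ
  have hf1 : 0 < f 1 := by
    by_contra! hle
    obtain ⟨t, ht, hft⟩ := intermediate_value_Icc' zero_le_one hf.continuousOn ⟨hle, hf0.le⟩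
    exact hne t ht hft
  rw [← sign_mul, ← det_transpose Q, ← det_mul]
  simp only [f, one_smul] at hf1
  rcases pos_and_pos_or_neg_and_neg_of_mul_pos hf1 with ⟨h₀, h₁⟩ | ⟨h₀, h₁⟩
  · rw [sign_pos h₀, sign_pos h₁]
  · rw [sign_neg h₀, sign_neg h₁]

end PositiveDefinite

section ExteriorSquare

variable {R : Type*} [CommRing R]

/-- The second exterior power of `4 × 4` matrices over a commutative ring, as a monoid
homomorphism; over `ℤ` it is `lam2`. -/
def exteriorSquare : Matrix (Fin 4) (Fin 4) R →* Matrix (Fin 6) (Fin 6) R where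
  toFun ψ := of fun I J =>
    ψ (pfst I) (pfst J) * ψ (psnd I) (psnd J) - ψ (pfst I) (psnd J) * ψ (psnd I) (pfst J)
  map_one' := by
    ext I J
    fin_cases I <;> fin_cases J <;> simp [pfst, psnd, one_apply]
  map_mul' A B := by
    ext I J
    simp only [mul_apply, of_apply, Fin.sum_univ_four, Fin.sum_univ_six]
    generalize pfst I = i, psnd I = j, pfst J = k, psnd J = l
    simp only [pfst, psnd, cons_val]
    ring

theorem exteriorSquare_apply (ψ : Matrix (Fin 4) (Fin 4) R) (I J : Fin 6) :
    exteriorSquare ψ I J =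
      ψ (pfst I) (pfst J) * ψ (psnd I) (psnd J) - ψ (pfst I) (psnd J) * ψ (psnd I) (pfst J) :=
  rfl

theorem lam2_eq_exteriorSquare (ψ : Matrix (Fin 4) (Fin 4) ℤ) : lam2 ψ = exteriorSquare ψ := rfl

theorem map_exteriorSquare {S : Type*} [CommRing S] (f : R →+* S) (ψ : Matrix (Fin 4) (Fin 4) R) :
    (exteriorSquare ψ).map f = exteriorSquare (ψ.map f) := by
  ext I J
  simp [exteriorSquare_apply]

theorem exteriorSquare_diagonal (D : Fin 4 → R) :
    exteriorSquare (diagonal D) = diagonal fun I => D (pfst I) * D (psnd I) := by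
  ext I J
  fin_cases I <;> fin_cases J <;> simp [exteriorSquare_apply, pfst, psnd, diagonal]

variable (R) in
/-- The Gram matrix `G6` of the wedge pairing on `Λ²R⁴`. -/
def wedgeGram : Matrix (Fin 6) (Fin 6) R := G6.map (Int.cast : ℤ → R)

/-- The wedge pairing `Λ²R⁴ × Λ²R⁴ → Λ⁴R⁴ = R` in the standard bases. -/
def wedge (x y : Fin 6 → R) : R := x ⬝ᵥ (wedgeGram R *ᵥ y)

theorem wedgeGram_int : wedgeGram ℤ = G6 := by
  ext I J
  simp [wedgeGram]

theorem wedgeGram_eq : wedgeGram R =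
    !![0, 0, 0, 0, 0, 1;
       0, 0, 0, 0, -1, 0;
       0, 0, 0, 1, 0, 0;
       0, 0, 1, 0, 0, 0;
       0, -1, 0, 0, 0, 0;
       1, 0, 0, 0, 0, 0] := by
  ext I J
  fin_cases I <;> fin_cases J <;> simp [wedgeGram, G6]

theorem wedge_eq (x y : Fin 6 → R) :
    wedge x y = x 0 * y 5 + x 5 * y 0 - x 1 * y 4 - x 4 * y 1 + x 2 * y 3 + x 3 * y 2 := by
  simp only [wedge, wedgeGram_eq, dotProduct, mulVec, Fin.sum_univ_six, of_apply, cons_val]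
  ring

theorem isUnit_det_wedgeGram : IsUnit (wedgeGram R).det := by
  refine isUnit_det_of_left_inverse (B := wedgeGram R) ?_
  rw [wedgeGram_eq]
  ext I J
  fin_cases I <;> fin_cases J <;> simp [mul_apply, Fin.sum_univ_six]

theorem wedge_mulVec_mulVec {g : Matrix (Fin 6) (Fin 6) R} (hg : g ∈ gramIsometries (wedgeGram R))
    (x y : Fin 6 → R) : wedge (g *ᵥ x) (g *ᵥ y) = wedge x y :=
  dotProduct_mulVec_isometry hg x y

/-- Laplace expansion along the first two rows. -/
theorem det_eq_wedge_exteriorSquare (A : Matrix (Fin 4) (Fin 4) R) :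
    A.det = wedge (exteriorSquare A 0) (exteriorSquare A 5) := by
  simp only [wedge_eq, exteriorSquare_apply, pfst, psnd, cons_val]
  simp [det_succ_row_zero, Fin.sum_univ_succ, Fin.succAbove, Fin.succ]
  ring

theorem transpose_mul_wedgeGram_mul_apply (g h : Matrix (Fin 6) (Fin 6) R) (I J : Fin 6) :
    (gᵀ * wedgeGram R * h) I J = wedge (g.col I) (h.col J) := by
  rw [Matrix.mul_assoc]
  rfl

theorem transpose_exteriorSquare_mul_wedgeGram_mul (A : Matrix (Fin 4) (Fin 4) R) :
    (exteriorSquare A)ᵀ * wedgeGram R * exteriorSquare A = A.det • wedgeGram R := by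
  ext I J
  rw [transpose_mul_wedgeGram_mul_apply, det_eq_wedge_exteriorSquare]
  simp only [wedge_eq, col_apply, exteriorSquare_apply, Matrix.smul_apply, smul_eq_mul,
    pfst, psnd, cons_val]
  fin_cases I <;> fin_cases J <;> simp [wedgeGram, G6] <;> ring

theorem exteriorSquare_mem_gramIsometries {A : Matrix (Fin 4) (Fin 4) R} (hA : A.det = 1) :
    exteriorSquare A ∈ gramIsometries (wedgeGram R) := by
  rw [mem_gramIsometries, transpose_exteriorSquare_mul_wedgeGram_mul, hA, one_smul]

end ExteriorSquare

section Orientation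

/-- The basis `e₀₁ + e₂₃, e₀₂ - e₁₃, e₀₃ + e₁₂` of the self-dual bivectors of `ℝ⁴`, by rows. -/
def selfDual : Matrix (Fin 3) (Fin 6) ℝ :=
  !![1, 0, 0, 0, 0, 1;
     0, 1, 0, 0, -1, 0;
     0, 0, 1, 1, 0, 0]

/-- The basis `e₀₁ - e₂₃, e₀₂ + e₁₃, e₀₃ - e₁₂` of the anti-self-dual bivectors of `ℝ⁴`, by
rows. -/
def antiSelfDual : Matrix (Fin 3) (Fin 6) ℝ :=
  !![1, 0, 0, 0, 0, -1;
     0, 1, 0, 0, 1, 0;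
     0, 0, 1, -1, 0, 0]

theorem wedgeGram_real_eq : wedgeGram ℝ =
    (1 / 2 : ℝ) • (selfDualᵀ * selfDual - antiSelfDualᵀ * antiSelfDual) := by
  rw [wedgeGram_eq]
  ext I J
  fin_cases I <;> fin_cases J <;>
    simp [selfDual, antiSelfDual, mul_apply, Fin.sum_univ_three] <;> norm_num

/-- The rows of `U` are a basis of a positive definite subspace of `Λ²ℝ⁴`. -/
def IsPositive {κ : Type*} (U : Matrix κ (Fin 6) ℝ) : Prop :=
  (U * wedgeGram ℝ * Uᵀ).PosDef

/-- The orientation of a positive definite 3-space with basis the rows of `U`: the sign of its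
orthogonal projection to the self-dual bivectors. -/
noncomputable def orientation (U : Matrix (Fin 3) (Fin 6) ℝ) : SignType :=
  SignType.sign (U * selfDualᵀ).det

/-- The sign by which an isometry `g` of `Λ²ℝ⁴` acts on orientations of positive definite 3-spaces,
read off the self-dual bivectors. -/
noncomputable def orientationSign (g : Matrix (Fin 6) (Fin 6) ℝ) : SignType :=
  orientation (selfDual * gᵀ)

theorem mul_wedgeGram_mul_transpose {κ : Type*} (U V : Matrix κ (Fin 6) ℝ) :
    U * wedgeGram ℝ * Vᵀ = (1 / 2 : ℝ) • (U * selfDualᵀ * (V * selfDualᵀ)ᵀ -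
      U * antiSelfDualᵀ * (V * antiSelfDualᵀ)ᵀ) := by
  rw [wedgeGram_real_eq]
  simp only [transpose_mul, transpose_transpose, Matrix.mul_smul, Matrix.smul_mul,
    Matrix.mul_sub, Matrix.sub_mul, Matrix.mul_assoc]

theorem IsPositive.posDef_sub {κ : Type*} {U : Matrix κ (Fin 6) ℝ} (hU : IsPositive U) :
    (U * selfDualᵀ * (U * selfDualᵀ)ᵀ - U * antiSelfDualᵀ * (U * antiSelfDualᵀ)ᵀ).PosDef := by
  have h := hU.smul (two_pos (α := ℝ))
  rwa [mul_wedgeGram_mul_transpose, smul_smul, mul_one_div_cancel two_ne_zero, one_smul] at h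

theorem IsPositive.card_le {κ : Type*} [Fintype κ] {U : Matrix κ (Fin 6) ℝ} (hU : IsPositive U) :
    Fintype.card κ ≤ 3 :=
  card_le_card_of_posDef_sub hU.posDef_sub

theorem IsPositive.submatrix_left {κ κ' : Type*} {U : Matrix κ (Fin 6) ℝ} (hU : IsPositive U)
    {f : κ' → κ} (hf : Function.Injective f) : IsPositive (U.submatrix f id) := by
  have h := PosDef.submatrix hU hf
  rwa [← submatrix_mul_equiv _ _ _ (Equiv.refl _), ← submatrix_mul_equiv _ _ _ (Equiv.refl _)] at h

theorem IsPositive.mul_transpose {κ : Type*} {U : Matrix κ (Fin 6) ℝ} (hU : IsPositive U)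
    {g : Matrix (Fin 6) (Fin 6) ℝ} (hg : g ∈ gramIsometries (wedgeGram ℝ)) :
    IsPositive (U * gᵀ) := by
  rw [IsPositive, gram_mul_isometry hg]
  exact hU

theorem selfDual_mul_transpose : selfDual * selfDualᵀ = (2 : ℝ) • 1 := by
  ext i j
  fin_cases i <;> fin_cases j <;>
    simp [selfDual, mul_apply, Fin.sum_univ_six] <;> norm_num

theorem selfDual_mul_wedgeGram : selfDual * wedgeGram ℝ = selfDual := by
  rw [wedgeGram_eq]
  ext i j
  fin_cases i <;> fin_cases j <;> simp [selfDual, mul_apply, Fin.sum_univ_six]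

theorem isPositive_selfDual : IsPositive selfDual := by
  rw [IsPositive, selfDual_mul_wedgeGram, selfDual_mul_transpose]
  exact PosDef.one.smul two_pos

theorem orientation_selfDual : orientation selfDual = 1 := by
  simp [orientation, selfDual_mul_transpose]

variable {U V : Matrix (Fin 3) (Fin 6) ℝ} {g h : Matrix (Fin 6) (Fin 6) ℝ}

theorem sign_det_gram (hU : IsPositive U) (hV : IsPositive V) :
    SignType.sign (U * wedgeGram ℝ * Vᵀ).det = orientation U * orientation V := by
  rw [mul_wedgeGram_mul_transpose, det_smul, sign_mul, sign_pos (by positivity), one_mul,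
    sign_det_mul_transpose_sub hU.posDef_sub hV.posDef_sub, orientation, orientation]

theorem orientation_mul_self (hU : IsPositive U) : orientation U * orientation U = 1 := by
  rw [← sign_det_gram hU hU, sign_pos hU.det_pos]

theorem orientation_mul_transpose (hg : g ∈ gramIsometries (wedgeGram ℝ)) (hU : IsPositive U) :
    orientation (U * gᵀ) = orientation U * orientationSign g := by
  have hpair : orientation (U * gᵀ) * orientationSign g = orientation U := by
    rw [orientationSign,
      ← sign_det_gram (hU.mul_transpose hg) (isPositive_selfDual.mul_transpose hg),
      gram_mul_isometry hg, sign_det_gram hU isPositive_selfDual, orientation_selfDual, mul_one]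
  rw [← hpair, mul_assoc, orientationSign,
    orientation_mul_self (isPositive_selfDual.mul_transpose hg), mul_one]

theorem orientationSign_one : orientationSign 1 = 1 := by
  rw [orientationSign, transpose_one, Matrix.mul_one, orientation_selfDual]

theorem orientationSign_mul (hg : g ∈ gramIsometries (wedgeGram ℝ))
    (hh : h ∈ gramIsometries (wedgeGram ℝ)) :
    orientationSign (g * h) = orientationSign g * orientationSign h := by
  rw [orientationSign, transpose_mul, ← Matrix.mul_assoc,
    orientation_mul_transpose hg (isPositive_selfDual.mul_transpose hh), mul_comm]
  rfl

theorem orientationSign_mul_self (hg : g ∈ gramIsometries (wedgeGram ℝ)) :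
    orientationSign g * orientationSign g = 1 :=
  orientation_mul_self (isPositive_selfDual.mul_transpose hg)

theorem of_bilinR_G6 {κ : Type*} (w v : κ → Fin 6 → ℝ) :
    (of fun i j => bilinR G6 (w i) (v j)) = of w * wedgeGram ℝ * (of v)ᵀ := by
  rw [Matrix.mul_assoc]
  rfl

theorem isMaxPosTuple_iff {k : ℕ} {w : Fin k → Fin 6 → ℝ} :
    IsMaxPosTuple G6 w ↔ k = 3 ∧ IsPositive (of w) := by
  have hgram {m : ℕ} (v : Fin m → Fin 6 → ℝ) :
      (of fun i j => bilinR G6 (v i) (v j)).PosDef ↔ IsPositive (of v) := by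
    rw [of_bilinR_G6, IsPositive]
  simp only [IsMaxPosTuple, hgram]
  constructor
  · rintro ⟨hw, hmax⟩
    refine ⟨le_antisymm (by simpa using hw.card_le) ?_, hw⟩
    by_contra! hk
    exact hmax _ (isPositive_selfDual.submatrix_left (Fin.castLE_injective (Nat.succ_le_of_lt hk)))
  · rintro ⟨rfl, hw⟩
    exact ⟨hw, fun w' hw' => absurd hw'.card_le (by simp)⟩

theorem orientPres_iff {g : Matrix (Fin 6) (Fin 6) ℤ}
    (hg : g.map (Int.cast : ℤ → ℝ) ∈ gramIsometries (wedgeGram ℝ)) :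
    OrientPres G6 g ↔ orientationSign (g.map (Int.cast : ℤ → ℝ)) = 1 := by
  have hsign {w : Fin 3 → Fin 6 → ℝ} (hw : IsPositive (of w)) :
      SignType.sign (of fun i j => bilinR G6 (w i) (g.map (Int.cast : ℤ → ℝ) *ᵥ w j)).det =
        orientationSign (g.map (Int.cast : ℤ → ℝ)) := by
    rw [of_bilinR_G6 w fun j => g.map (Int.cast : ℤ → ℝ) *ᵥ w j, of_mulVec,
      sign_det_gram hw (hw.mul_transpose hg), orientation_mul_transpose hg hw, ← mul_assoc,
      orientation_mul_self hw, one_mul]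
  constructor
  · intro h
    rw [← hsign (w := selfDual) isPositive_selfDual, sign_eq_one_iff]
    exact h 3 selfDual (isMaxPosTuple_iff.2 ⟨rfl, isPositive_selfDual⟩)
  · intro h k w hw
    obtain ⟨rfl, hpos⟩ := isMaxPosTuple_iff.1 hw
    rw [← sign_eq_one_iff, hsign hpos, h]

end Orientation

section SpecialOrthogonal

variable {g : Matrix (Fin 6) (Fin 6) ℝ}

/-- The group `SO⁺(Λ²ℝ⁴)`, as a monoid of matrices. -/
noncomputable def realSOPlus : Submonoid (Matrix (Fin 6) (Fin 6) ℝ) where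
  carrier := {g | g ∈ gramIsometries (wedgeGram ℝ) ∧ g.det = 1 ∧ orientationSign g = 1}
  one_mem' := ⟨one_mem _, det_one, orientationSign_one⟩
  mul_mem' := by
    rintro g h ⟨hg, hgdet, hgsign⟩ ⟨hh, hhdet, hhsign⟩
    refine ⟨mul_mem hg hh, ?_, ?_⟩
    · rw [det_mul, hgdet, hhdet, mul_one]
    · rw [orientationSign_mul hg hh, hgsign, hhsign, mul_one]

theorem mem_realSOPlus : g ∈ realSOPlus ↔
    g ∈ gramIsometries (wedgeGram ℝ) ∧ g.det = 1 ∧ orientationSign g = 1 :=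
  Iff.rfl

theorem isIsometry_iff_map_mem_gramIsometries {g : Matrix (Fin 6) (Fin 6) ℤ} :
    IsIsometry G6 g ↔ g.map (Int.cast : ℤ → ℝ) ∈ gramIsometries (wedgeGram ℝ) := by
  have hmap : (g.map (Int.cast : ℤ → ℝ))ᵀ * wedgeGram ℝ * g.map (Int.cast : ℤ → ℝ) =
      (gᵀ * G6 * g).map (Int.castRingHom ℝ) := by
    rw [Matrix.map_mul, Matrix.map_mul]
    rfl
  rw [mem_gramIsometries, hmap]
  exact (Matrix.map_injective (RingHom.injective_int (Int.castRingHom ℝ))).eq_iff.symm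

theorem isIsometry_det_orientPres_iff {g : Matrix (Fin 6) (Fin 6) ℤ} :
    IsIsometry G6 g ∧ g.det = 1 ∧ OrientPres G6 g ↔ g.map (Int.cast : ℤ → ℝ) ∈ realSOPlus := by
  rw [mem_realSOPlus, isIsometry_iff_map_mem_gramIsometries]
  refine and_congr_right fun hg => and_congr ?_ (orientPres_iff hg)
  rw [← Int.cast_det, Int.cast_eq_one]

theorem mul_self_mem_realSOPlus (hg : g ∈ gramIsometries (wedgeGram ℝ)) :
    g * g ∈ realSOPlus := by
  refine ⟨mul_mem hg hg, ?_, ?_⟩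
  · rw [det_mul, det_mul_self_of_mem_gramIsometries isUnit_det_wedgeGram hg]
  · rw [orientationSign_mul hg hg, orientationSign_mul_self hg]

theorem exteriorSquare_transvection_mem_realSOPlus (t : TransvectionStruct (Fin 4) ℝ) :
    exteriorSquare t.toMatrix ∈ realSOPlus := by
  have hhalf : t.toMatrix = transvection t.i t.j (t.c / 2) * transvection t.i t.j (t.c / 2) := by
    rw [transvection_mul_transvection_same _ _ t.hij, add_halves, TransvectionStruct.toMatrix]
  rw [hhalf, map_mul]
  exact mul_self_mem_realSOPlus
    (exteriorSquare_mem_gramIsometries (det_transvection_of_ne _ _ t.hij _))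

theorem exteriorSquare_prod_transvections_mem_realSOPlus
    (L : List (TransvectionStruct (Fin 4) ℝ)) :
    exteriorSquare (L.map TransvectionStruct.toMatrix).prod ∈ realSOPlus := by
  rw [map_list_prod, List.map_map]
  refine Submonoid.list_prod_mem _ fun A hA => ?_
  obtain ⟨t, -, rfl⟩ := List.mem_map.1 hA
  exact exteriorSquare_transvection_mem_realSOPlus t

theorem orientationSign_diagonal (d : Fin 6 → ℝ) : orientationSign (diagonal d) =
    SignType.sign ((d 0 + d 5) * (d 1 + d 4) * (d 2 + d 3)) := by
  have hprod : selfDual * (diagonal d)ᵀ * selfDualᵀ =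
      diagonal ![d 0 + d 5, d 1 + d 4, d 2 + d 3] := by
    ext i j
    rw [diagonal_transpose, mul_apply]
    fin_cases i <;> fin_cases j <;> simp [selfDual, Fin.sum_univ_six]
  rw [orientationSign, orientation, hprod, det_diagonal, Fin.prod_univ_three]
  rfl

theorem sign_add_of_mul_pos {α : Type*} [Ring α] [LinearOrder α] [IsStrictOrderedRing α]
    {x y : α} (h : 0 < x * y) :
    SignType.sign (x + y) = SignType.sign x := by
  rcases pos_and_pos_or_neg_and_neg_of_mul_pos h with ⟨hx, hy⟩ | ⟨hx, hy⟩
  · rw [sign_pos hx, sign_pos (add_pos hx hy)]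
  · rw [sign_neg hx, sign_neg (add_neg hx hy)]

theorem exteriorSquare_diagonal_mem_realSOPlus {D : Fin 4 → ℝ} (hD : (diagonal D).det = 1) :
    exteriorSquare (diagonal D) ∈ realSOPlus := by
  refine ⟨exteriorSquare_mem_gramIsometries hD, ?_, ?_⟩ <;>
    rw [det_diagonal, Fin.prod_univ_four] at hD <;>
    rw [exteriorSquare_diagonal]
  · rw [det_diagonal, Fin.prod_univ_six]
    calc D 0 * D 1 * (D 0 * D 2) * (D 0 * D 3) * (D 1 * D 2) * (D 1 * D 3) * (D 2 * D 3)
        = (D 0 * D 1 * D 2 * D 3) ^ 3 := by ring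
      _ = 1 := by rw [hD, one_pow]
  · have hD0 : D 0 ≠ 0 := by
      rintro h0
      simp [h0] at hD
    rw [orientationSign_diagonal, sign_mul, sign_mul]
    simp only [pfst, psnd, cons_val]
    rw [sign_add_of_mul_pos (x := D 0 * D 1) (y := D 2 * D 3) (by linarith),
      sign_add_of_mul_pos (x := D 0 * D 2) (y := D 1 * D 3) (by linarith),
      sign_add_of_mul_pos (x := D 0 * D 3) (y := D 1 * D 2) (by linarith),
      ← sign_mul, ← sign_mul]
    refine sign_pos ?_
    calc 0 < D 0 ^ 2 := by positivity
      _ = D 0 * D 1 * (D 0 * D 2) * (D 0 * D 3) := by linear_combination -D 0 ^ 2 * hD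

theorem exteriorSquare_mem_realSOPlus {A : Matrix (Fin 4) (Fin 4) ℝ} (hA : A.det = 1) :
    exteriorSquare A ∈ realSOPlus := by
  obtain ⟨L, L', D, rfl⟩ := Pivot.exists_list_transvec_mul_diagonal_mul_list_transvec A
  have hD : (diagonal D).det = 1 := by
    simpa only [det_mul, TransvectionStruct.det_toMatrix_prod, one_mul, mul_one] using hA
  rw [map_mul, map_mul]
  exact mul_mem (mul_mem (exteriorSquare_prod_transvections_mem_realSOPlus L)
    (exteriorSquare_diagonal_mem_realSOPlus hD))
    (exteriorSquare_prod_transvections_mem_realSOPlus L')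

end SpecialOrthogonal

section Transitivity

variable {R : Type*} [CommRing R] {F : Set (Fin 6 → R)} {x y z : Fin 6 → R}

/-- Some element of `SL₄(R)` fixes `F` pointwise and maps `x` to `y` in its action on `Λ²R⁴`. -/
def MovesFixing (F : Set (Fin 6 → R)) (x y : Fin 6 → R) : Prop :=
  ∃ ψ : Matrix (Fin 4) (Fin 4) R,
    ψ.det = 1 ∧ (∀ z ∈ F, exteriorSquare ψ *ᵥ z = z) ∧ exteriorSquare ψ *ᵥ x = y

namespace MovesFixing

theorem trans (hxy : MovesFixing F x y) (hyz : MovesFixing F y z) : MovesFixing F x z := by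
  obtain ⟨ψ, hψ, hψF, rfl⟩ := hxy
  obtain ⟨φ, hφ, hφF, rfl⟩ := hyz
  refine ⟨φ * ψ, by rw [det_mul, hφ, hψ, one_mul], fun z hz => ?_, ?_⟩
  · rw [map_mul, ← mulVec_mulVec, hψF z hz, hφF z hz]
  · rw [map_mul, mulVec_mulVec]

theorem mono {F' : Set (Fin 6 → R)} (h : MovesFixing F x y) (hF : F' ⊆ F) :
    MovesFixing F' x y := by
  obtain ⟨ψ, hψ, hψF, hxy⟩ := h
  exact ⟨ψ, hψ, fun z hz => hψF z (hF hz), hxy⟩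

theorem wedge_self (h : MovesFixing F x y) : wedge y y = wedge x x := by
  obtain ⟨ψ, hψ, -, rfl⟩ := h
  exact wedge_mulVec_mulVec (exteriorSquare_mem_gramIsometries hψ) x x

theorem exists_wedge_eq_one (h : MovesFixing F x y) (hx : ∃ z, wedge x z = 1) :
    ∃ z, wedge y z = 1 := by
  obtain ⟨ψ, hψ, -, rfl⟩ := h
  obtain ⟨z, hz⟩ := hx
  exact ⟨_, (wedge_mulVec_mulVec (exteriorSquare_mem_gramIsometries hψ) x z).trans hz⟩

end MovesFixing

theorem exteriorSquare_mulVec_apply (ψ : Matrix (Fin 4) (Fin 4) R) (x : Fin 6 → R) (I : Fin 6) :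
    (exteriorSquare ψ *ᵥ x) I = ∑ J, (ψ (pfst I) (pfst J) * ψ (psnd I) (psnd J) -
      ψ (pfst I) (psnd J) * ψ (psnd I) (pfst J)) * x J :=
  rfl

/-- A row operation on `!![b, c; d, e]`, as `movesFixing_columns` is a column operation. -/
theorem movesFixing_rows {p q r s : R} (h : p * s - q * r = 1) (a b c d e f : R) :
    MovesFixing {Pi.single 5 1, Pi.single 0 1} ![a, b, c, d, e, f]
      ![a, p * b + q * d, p * c + q * e, r * b + s * d, r * c + s * e, f] := by
  refine ⟨!![p, q, 0, 0; r, s, 0, 0; 0, 0, 1, 0; 0, 0, 0, 1], ?_, ?_, ?_⟩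
  · simpa [det_eq_wedge_exteriorSquare, wedge_eq, exteriorSquare_apply, pfst, psnd] using h
  · rintro z (rfl | rfl) <;> ext I <;> fin_cases I <;>
      simp [exteriorSquare_apply, pfst, psnd, h]
  · ext I
    fin_cases I <;> simp [exteriorSquare_mulVec_apply, pfst, psnd, Fin.sum_univ_six, h]

theorem movesFixing_columns {p q r s : R} (h : p * s - q * r = 1) (a b c d e f : R) :
    MovesFixing {Pi.single 5 1, Pi.single 0 1} ![a, b, c, d, e, f]
      ![a, p * b + q * c, r * b + s * c, p * d + q * e, r * d + s * e, f] := by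
  refine ⟨!![1, 0, 0, 0; 0, 1, 0, 0; 0, 0, p, q; 0, 0, r, s], ?_, ?_, ?_⟩
  · simpa [det_eq_wedge_exteriorSquare, wedge_eq, exteriorSquare_apply, pfst, psnd] using h
  · rintro z (rfl | rfl) <;> ext I <;> fin_cases I <;>
      simp [exteriorSquare_apply, pfst, psnd, h]
  · ext I
    fin_cases I <;> simp [exteriorSquare_mulVec_apply, pfst, psnd, Fin.sum_univ_six, h]

theorem movesFixing_middle {p q r s : R} (h : p * s - q * r = 1) (a b c d e f : R) :
    MovesFixing ∅ ![a, b, c, d, e, f]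
      ![p * a + q * b, r * a + s * b, c, d, p * e + q * f, r * e + s * f] := by
  refine ⟨!![1, 0, 0, 0; 0, p, q, 0; 0, r, s, 0; 0, 0, 0, 1], ?_, by simp, ?_⟩
  · simpa [det_eq_wedge_exteriorSquare, wedge_eq, exteriorSquare_apply, pfst, psnd] using h
  · ext I
    fin_cases I <;> simp [exteriorSquare_mulVec_apply, pfst, psnd, Fin.sum_univ_six, h]

theorem movesFixing_single_five (hx : x 0 * x 5 - x 1 * x 4 + x 2 * x 3 = 0) (h5 : x 5 = 1) :
    MovesFixing {Pi.single 0 1} x (Pi.single 5 1) := by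
  refine ⟨!![1, 0, -x 2, x 1; 0, 1, -x 4, x 3; 0, 0, 1, 0; 0, 0, 0, 1], ?_, ?_, ?_⟩
  · simp [det_eq_wedge_exteriorSquare, wedge_eq, exteriorSquare_apply, pfst, psnd]
  · rintro z rfl
    ext I
    fin_cases I <;> simp [exteriorSquare_apply, pfst, psnd]
  · ext I
    fin_cases I <;> simp [exteriorSquare_mulVec_apply, pfst, psnd, Fin.sum_univ_six, h5]
    linear_combination hx - x 0 * h5

theorem movesFixing_single_four (hx : x 0 * x 5 - x 1 * x 4 + x 2 * x 3 = 0) (h0 : x 0 = 0)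
    (h5 : x 5 = 0) (h4 : x 4 = 1) :
    MovesFixing {Pi.single 1 1, Pi.single 5 1, Pi.single 0 1} x (Pi.single 4 1) := by
  refine ⟨!![1, -x 2, 0, 0; 0, 1, 0, 0; 0, 0, 1, -x 3; 0, 0, 0, 1], ?_, ?_, ?_⟩
  · simp [det_eq_wedge_exteriorSquare, wedge_eq, exteriorSquare_apply, pfst, psnd]
  · rintro z (rfl | rfl | rfl) <;> ext I <;> fin_cases I <;>
      simp [exteriorSquare_apply, pfst, psnd]
  · ext I
    fin_cases I <;> simp [exteriorSquare_mulVec_apply, pfst, psnd, Fin.sum_univ_six, h0, h5, h4]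
    linear_combination -hx + x 5 * h0 - x 1 * h4

theorem wedge_self_eq_zero_iff [IsDomain R] [NeZero (2 : R)] :
    wedge x x = 0 ↔ x 0 * x 5 - x 1 * x 4 + x 2 * x 3 = 0 := by
  have htwo : wedge x x = 2 * (x 0 * x 5 - x 1 * x 4 + x 2 * x 3) := by
    rw [wedge_eq]
    ring
  rw [htwo, mul_eq_zero, or_iff_right two_ne_zero]

variable [IsDomain R] [IsBezout R]

theorem exists_det_eq_one_fst_eq_zero (a b : R) :
    ∃ p q r s : R, p * s - q * r = 1 ∧ p * a + q * b = 0 := by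
  obtain ⟨a', ha⟩ := IsBezout.gcd_dvd_left a b
  obtain ⟨b', hb⟩ := IsBezout.gcd_dvd_right a b
  obtain ⟨u, v, huv⟩ := IsBezout.gcd_eq_sum a b
  by_cases hgcd : IsBezout.gcd a b = 0
  · rw [hgcd, zero_mul] at ha hb
    exact ⟨1, 0, 0, 1, by ring, by rw [ha, hb]; ring⟩
  · refine ⟨b', -a', u, v, mul_left_cancel₀ hgcd ?_, ?_⟩
    · linear_combination huv - u * ha - v * hb
    · linear_combination b' * ha - a' * hb

theorem exists_det_eq_one_snd_eq_zero (a b : R) :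
    ∃ p q r s : R, p * s - q * r = 1 ∧ r * a + s * b = 0 := by
  obtain ⟨p, q, r, s, hdet, h⟩ := exists_det_eq_one_fst_eq_zero a b
  exact ⟨r, s, -p, -q, by linear_combination hdet, by linear_combination -h⟩

theorem exists_movesFixing_two_eq_zero (x : Fin 6 → R) :
    ∃ b d e, MovesFixing {Pi.single 5 1, Pi.single 0 1} x ![x 0, b, 0, d, e, x 5] := by
  obtain ⟨p, q, r, s, hdet, hc⟩ := exists_det_eq_one_snd_eq_zero (x 1) (x 2)
  have hx : x = ![x 0, x 1, x 2, x 3, x 4, x 5] := by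
    ext I
    fin_cases I <;> rfl
  have hmove := movesFixing_columns hdet (x 0) (x 1) (x 2) (x 3) (x 4) (x 5)
  rw [hc, ← hx] at hmove
  exact ⟨_, _, _, hmove⟩

variable [NeZero (2 : R)]

theorem exists_movesFixing_single_one_smul (hx : wedge x x = 0) (h0 : x 0 = 0) (h5 : x 5 = 0) :
    ∃ h, MovesFixing {Pi.single 5 1, Pi.single 0 1} x ![0, h, 0, 0, 0, 0] := by
  obtain ⟨b, d, e, hxb⟩ := exists_movesFixing_two_eq_zero x
  rw [h0, h5] at hxb
  have hbe : b = 0 ∨ e = 0 := by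
    simpa [wedge_self_eq_zero_iff] using hxb.wedge_self.trans hx
  obtain ⟨b', d', hxb'⟩ : ∃ b' d', MovesFixing {Pi.single 5 1, Pi.single 0 1} x
      ![0, b', 0, d', 0, 0] := by
    rcases hbe with rfl | rfl
    · obtain ⟨p, q, r, s, hdet, he⟩ := exists_det_eq_one_snd_eq_zero d e
      have hmove := movesFixing_columns hdet 0 0 0 d e 0
      rw [he] at hmove
      exact ⟨0, _, hxb.trans (by simpa using hmove)⟩
    · exact ⟨b, d, hxb⟩
  obtain ⟨p, q, r, s, hdet, hd⟩ := exists_det_eq_one_snd_eq_zero b' d'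
  have hmove := movesFixing_rows hdet 0 b' 0 d' 0 0
  rw [hd] at hmove
  exact ⟨_, hxb'.trans (by simpa using hmove)⟩

theorem exists_movesFixing_zero_five_eq_zero (hx : wedge x x = 0) :
    ∃ y, MovesFixing ∅ x y ∧ y 0 = 0 ∧ y 5 = 0 := by
  obtain ⟨b, d, e, hxb⟩ := exists_movesFixing_two_eq_zero x
  obtain ⟨p, q, r, s, hdet, ha⟩ := exists_det_eq_one_fst_eq_zero (x 0) b
  have hmiddle := movesFixing_middle hdet (x 0) b 0 d e (x 5)
  rw [ha] at hmiddle
  obtain ⟨b₁, e₁, f₁, hxe⟩ : ∃ b₁ e₁ f₁, MovesFixing ∅ x ![0, b₁, 0, d, e₁, f₁] :=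
    ⟨_, _, _, (hxb.mono (Set.empty_subset _)).trans hmiddle⟩
  have hbe : b₁ = 0 ∨ e₁ = 0 := by
    simpa [wedge_self_eq_zero_iff] using hxe.wedge_self.trans hx
  obtain ⟨d₂, e₂, f₂, hxd⟩ : ∃ d₂ e₂ f₂, MovesFixing ∅ x ![0, 0, 0, d₂, e₂, f₂] := by
    rcases hbe with rfl | rfl
    · exact ⟨_, _, _, hxe⟩
    · obtain ⟨p, q, r, s, hdet, hb⟩ := exists_det_eq_one_fst_eq_zero b₁ d
      have hrows := movesFixing_rows hdet 0 b₁ 0 d 0 f₁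
      rw [hb] at hrows
      exact ⟨_, 0, f₁, hxe.trans (by simpa using hrows.mono (Set.empty_subset _))⟩
  obtain ⟨p, q, r, s, hdet, hf⟩ := exists_det_eq_one_snd_eq_zero e₂ f₂
  have hmiddle := movesFixing_middle hdet 0 0 0 d₂ e₂ f₂
  rw [hf] at hmiddle
  exact ⟨_, hxd.trans hmiddle, by simp, rfl⟩

theorem movesFixing_single_one (hx : wedge x x = 0) (hunimod : ∃ y, wedge x y = 1)
    (h0 : x 0 = 0) (h5 : x 5 = 0) :
    MovesFixing {Pi.single 5 1, Pi.single 0 1} x (Pi.single 1 1) := by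
  obtain ⟨h, hxh⟩ := exists_movesFixing_single_one_smul hx h0 h5
  obtain ⟨y, hy⟩ := hxh.exists_wedge_eq_one hunimod
  have hunit : h * -y 4 = 1 := by simpa [wedge_eq] using hy
  have hscale := movesFixing_rows (p := -y 4) (q := 0) (r := 0) (s := h)
    (by linear_combination hunit) 0 h 0 0 0 0
  convert hxh.trans hscale using 1
  ext I
  fin_cases I <;> simp [mul_comm, ← hunit]

theorem movesFixing_single_zero (hx : wedge x x = 0) (hunimod : ∃ y, wedge x y = 1) :
    MovesFixing ∅ x (Pi.single 0 1) := by
  obtain ⟨y, hxy, hy0, hy5⟩ := exists_movesFixing_zero_five_eq_zero hx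
  have hye := movesFixing_single_one (hxy.wedge_self.trans hx)
    (hxy.exists_wedge_eq_one hunimod) hy0 hy5
  have hswap := movesFixing_middle (p := 0) (q := 1) (r := -1) (s := (0 : R)) (by ring) 0 1 0 0 0 0
  refine (hxy.trans (hye.mono (Set.empty_subset _))).trans ?_
  convert hswap using 1 <;> ext I <;> fin_cases I <;> simp

end Transitivity

section Reduction

variable {R : Type*} [CommRing R] {g : Matrix (Fin 6) (Fin 6) R}

/-- Some translate of `g` by the image of `SL₄(R)` fixes `F` pointwise. -/
def FixesUpToSL (g : Matrix (Fin 6) (Fin 6) R) (F : Set (Fin 6 → R)) : Prop :=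
  ∃ ψ : Matrix (Fin 4) (Fin 4) R, ψ.det = 1 ∧ ∀ z ∈ F, (exteriorSquare ψ * g) *ᵥ z = z

theorem fixesUpToSL_empty : FixesUpToSL g ∅ := ⟨1, det_one, by simp⟩

theorem FixesUpToSL.insert {F : Set (Fin 6 → R)} {v : Fin 6 → R}
    (hg : g ∈ gramIsometries (wedgeGram R)) (hfix : FixesUpToSL g F)
    (hmove : ∀ h ∈ gramIsometries (wedgeGram R), (∀ z ∈ F, h *ᵥ z = z) →
      MovesFixing F (h *ᵥ v) v) :
    FixesUpToSL g (insert v F) := by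
  obtain ⟨ψ, hψ, hψF⟩ := hfix
  obtain ⟨φ, hφ, hφF, hφv⟩ := hmove _ (mul_mem (exteriorSquare_mem_gramIsometries hψ) hg) hψF
  refine ⟨φ * ψ, by rw [det_mul, hφ, hψ, one_mul], ?_⟩
  rw [map_mul, Matrix.mul_assoc]
  simp only [← mulVec_mulVec _ (exteriorSquare φ)]
  rintro z (rfl | hz)
  · exact hφv
  · rw [hψF z hz, hφF z hz]

theorem mulVec_apply_rev_of_mulVec_single_eq (hg : g ∈ gramIsometries (wedgeGram R)) {I : Fin 6}
    (hI : g *ᵥ Pi.single I 1 = Pi.single I 1) (x : Fin 6 → R) : (g *ᵥ x) I.rev = x I.rev := by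
  have hwedge : wedge (Pi.single I 1) (g *ᵥ x) = wedge (Pi.single I 1) x := by
    rw [← wedge_mulVec_mulVec hg (Pi.single I 1) x, hI]
  fin_cases I <;> simpa [wedge_eq] using hwedge

theorem wedge_mulVec_single_self (hg : g ∈ gramIsometries (wedgeGram R)) (I : Fin 6) :
    wedge (g *ᵥ Pi.single I 1) (g *ᵥ Pi.single I 1) = 0 := by
  rw [wedge_mulVec_mulVec hg, wedge_eq]
  fin_cases I <;> simp

theorem exists_wedge_mulVec_single_eq_one (hg : g ∈ gramIsometries (wedgeGram R)) (I : Fin 6) :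
    ∃ y, wedge (g *ᵥ Pi.single I 1) y = 1 := by
  obtain ⟨y, hy⟩ : ∃ y : Fin 6 → R, wedge (Pi.single I 1) y = 1 := by
    refine ⟨wedgeGram R *ᵥ Pi.single I 1, ?_⟩
    fin_cases I <;> simp [wedge_eq, wedgeGram_eq]
  exact ⟨g *ᵥ y, by rw [wedge_mulVec_mulVec hg, hy]⟩

theorem fixesUpToSL_single [IsDomain R] [IsBezout R] [NeZero (2 : R)]
    (hg : g ∈ gramIsometries (wedgeGram R)) :
    FixesUpToSL g {Pi.single 4 1, Pi.single 1 1, Pi.single 5 1, Pi.single 0 1} := by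
  have fix0 : FixesUpToSL g {Pi.single 0 1} := by
    rw [← insert_empty_eq]
    exact fixesUpToSL_empty.insert hg fun h hh _ => movesFixing_single_zero
      (wedge_mulVec_single_self hh 0) (exists_wedge_mulVec_single_eq_one hh 0)
  have fix5 : FixesUpToSL g {Pi.single 5 1, Pi.single 0 1} := by
    refine fix0.insert hg fun h hh hfix => movesFixing_single_five
      (wedge_self_eq_zero_iff.1 (wedge_mulVec_single_self hh 5)) ?_
    exact mulVec_apply_rev_of_mulVec_single_eq hh (hfix (Pi.single 0 1) (by simp)) _
  have fix1 : FixesUpToSL g {Pi.single 1 1, Pi.single 5 1, Pi.single 0 1} := by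
    refine fix5.insert hg fun h hh hfix => movesFixing_single_one
      (wedge_mulVec_single_self hh 1) (exists_wedge_mulVec_single_eq_one hh 1) ?_ ?_
    · exact mulVec_apply_rev_of_mulVec_single_eq hh (hfix (Pi.single 5 1) (by simp)) _
    · exact mulVec_apply_rev_of_mulVec_single_eq hh (hfix (Pi.single 0 1) (by simp)) _
  refine fix1.insert hg fun h hh hfix => movesFixing_single_four
    (wedge_self_eq_zero_iff.1 (wedge_mulVec_single_self hh 4)) ?_ ?_ ?_
  · exact mulVec_apply_rev_of_mulVec_single_eq hh (hfix (Pi.single 5 1) (by simp)) _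
  · exact mulVec_apply_rev_of_mulVec_single_eq hh (hfix (Pi.single 0 1) (by simp)) _
  · exact mulVec_apply_rev_of_mulVec_single_eq hh (hfix (Pi.single 1 1) (by simp)) _

/-- The extension by the identity of `!![a, b; c, d]` on the hyperbolic plane `⟨e₀₃, e₁₂⟩`. -/
def planeExtension (a b c d : R) : Matrix (Fin 6) (Fin 6) R :=
  !![1, 0, 0, 0, 0, 0;
     0, 1, 0, 0, 0, 0;
     0, 0, a, b, 0, 0;
     0, 0, c, d, 0, 0;
     0, 0, 0, 0, 1, 0;
     0, 0, 0, 0, 0, 1]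

theorem planeExtension_one : planeExtension (1 : R) 0 0 1 = 1 := by
  ext I J
  fin_cases I <;> fin_cases J <;> rfl

theorem det_planeExtension (a b c d : R) : (planeExtension a b c d).det = a * d - b * c := by
  simp [planeExtension, det_succ_row_zero, Fin.sum_univ_succ, Fin.succAbove,
    sub_eq_add_neg]

theorem orientationSign_planeExtension (a b c d : ℝ) :
    orientationSign (planeExtension a b c d) = SignType.sign (a + b + c + d) := by
  have hprod : selfDual * (planeExtension a b c d)ᵀ * selfDualᵀ =
      diagonal ![2, 2, a + b + c + d] := by
    ext i j
    simp only [mul_apply, transpose_apply, Fin.sum_univ_six]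
    fin_cases i <;> fin_cases j <;> simp [selfDual, planeExtension] <;> ring
  rw [orientationSign, orientation, hprod, det_diagonal, Fin.prod_univ_three, sign_mul]
  simp

theorem eq_planeExtension_of_fixes (hg : g ∈ gramIsometries (wedgeGram R))
    (hfix : ∀ z ∈ ({Pi.single 4 1, Pi.single 1 1, Pi.single 5 1, Pi.single 0 1} :
      Set (Fin 6 → R)), g *ᵥ z = z) :
    g = planeExtension (g 2 2) (g 2 3) (g 3 2) (g 3 3) := by
  have hcol (J : Fin 6) (hJ : g *ᵥ Pi.single J 1 = Pi.single J 1) (I : Fin 6) :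
      g I J = Pi.single (M := fun _ => R) J 1 I := by
    simpa using congrFun hJ I
  have hrow (I : Fin 6) (hI : g *ᵥ Pi.single I 1 = Pi.single I 1) (J : Fin 6) :
      g I.rev J = Pi.single (M := fun _ => R) J 1 I.rev := by
    simpa using mulVec_apply_rev_of_mulVec_single_eq hg hI (Pi.single J 1)
  have col0 := hcol 0 (hfix _ (by simp))
  have col1 := hcol 1 (hfix _ (by simp))
  have col4 := hcol 4 (hfix _ (by simp))
  have col5 := hcol 5 (hfix _ (by simp))
  have row0 : ∀ J, g 0 J = _ := hrow 5 (hfix _ (by simp))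
  have row1 : ∀ J, g 1 J = _ := hrow 4 (hfix _ (by simp))
  have row4 : ∀ J, g 4 J = _ := hrow 1 (hfix _ (by simp))
  have row5 : ∀ J, g 5 J = _ := hrow 0 (hfix _ (by simp))
  ext I J
  fin_cases I <;> fin_cases J <;>
    simp [planeExtension, col0, col1, col4, col5, row0, row1, row4, row5]

theorem mul_eq_of_planeExtension_mem_gramIsometries [IsDomain R] [NeZero (2 : R)] {a b c d : R}
    (h : planeExtension a b c d ∈ gramIsometries (wedgeGram R)) :
    a * c = 0 ∧ b * d = 0 ∧ a * d + b * c = 1 := by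
  refine ⟨?_, ?_, ?_⟩
  · simpa [planeExtension, wedge_self_eq_zero_iff] using wedge_mulVec_single_self h 2
  · simpa [planeExtension, wedge_self_eq_zero_iff] using wedge_mulVec_single_self h 3
  · have h23 := wedge_mulVec_mulVec h (Pi.single 2 1) (Pi.single 3 1)
    simpa [planeExtension, wedge_eq, mul_comm] using h23

theorem map_planeExtension {S : Type*} [CommRing S] (f : R →+* S) (a b c d : R) :
    (planeExtension a b c d).map f = planeExtension (f a) (f b) (f c) (f d) := by
  ext I J
  fin_cases I <;> fin_cases J <;> simp [planeExtension]

theorem planeExtension_eq_one_of_map_mem_realSOPlus {a b c d : ℤ}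
    (h : (planeExtension a b c d).map (Int.cast : ℤ → ℝ) ∈ realSOPlus) :
    planeExtension a b c d = 1 := by
  have hmap : (planeExtension a b c d).map (Int.cast : ℤ → ℝ) = planeExtension (a : ℝ) b c d :=
    map_planeExtension (Int.castRingHom ℝ) a b c d
  rw [hmap] at h
  obtain ⟨hiso, hdet, hsign⟩ := h
  obtain ⟨hac, hbd, hadbc⟩ := mul_eq_of_planeExtension_mem_gramIsometries hiso
  rw [det_planeExtension] at hdet
  rw [orientationSign_planeExtension, sign_eq_one_iff] at hsign
  norm_cast at hac hbd hadbc hdet hsign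
  have had : a * d = 1 := by linarith
  have hb : b = 0 := (mul_eq_zero.1 hbd).resolve_right (right_ne_zero_of_mul_eq_one had)
  have hc : c = 0 := (mul_eq_zero.1 hac).resolve_left (left_ne_zero_of_mul_eq_one had)
  rcases Int.mul_eq_one_iff_eq_one_or_neg_one.1 had with ⟨ha, hd⟩ | ⟨ha, hd⟩
  · rw [ha, hb, hc, hd, planeExtension_one]
  · omega

theorem map_exteriorSquare_mem_realSOPlus {ψ : Matrix (Fin 4) (Fin 4) ℤ} (hψ : ψ.det = 1) :
    (exteriorSquare ψ).map (Int.cast : ℤ → ℝ) ∈ realSOPlus := by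
  have hdet : (ψ.map (Int.castRingHom ℝ)).det = 1 := by
    rw [← RingHom.mapMatrix_apply, ← RingHom.map_det, hψ, map_one]
  have hmem := exteriorSquare_mem_realSOPlus hdet
  rwa [← map_exteriorSquare] at hmem

theorem exists_eq_exteriorSquare_of_map_mem_realSOPlus {g : Matrix (Fin 6) (Fin 6) ℤ}
    (hg : g.map (Int.cast : ℤ → ℝ) ∈ realSOPlus) :
    ∃ ψ : Matrix (Fin 4) (Fin 4) ℤ, ψ.det = 1 ∧ g = exteriorSquare ψ := by
  have hiso : g ∈ gramIsometries (wedgeGram ℤ) := by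
    rw [mem_gramIsometries, wedgeGram_int]
    exact isIsometry_iff_map_mem_gramIsometries.2 hg.1
  obtain ⟨ψ, hψ, hfix⟩ := fixesUpToSL_single hiso
  have hmem : (exteriorSquare ψ * g).map (Int.cast : ℤ → ℝ) ∈ realSOPlus := by
    have hmul := mul_mem (map_exteriorSquare_mem_realSOPlus hψ) hg
    rwa [← Matrix.map_mul_intCast] at hmul
  have hone : exteriorSquare ψ * g = 1 := by
    have hplane := eq_planeExtension_of_fixes
      (mul_mem (exteriorSquare_mem_gramIsometries hψ) hiso) hfix
    rw [hplane] at hmem ⊢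
    exact planeExtension_eq_one_of_map_mem_realSOPlus hmem
  refine ⟨ψ.adjugate, by rw [det_adjugate, hψ, one_pow], ?_⟩
  calc g = exteriorSquare (ψ.adjugate * ψ) * g := by
        rw [adjugate_mul, hψ, one_smul, map_one, one_mul]
    _ = exteriorSquare ψ.adjugate := by rw [map_mul, mul_assoc, hone, mul_one]

end Reduction

/-- The image of `SL₄(ℤ)` under the second exterior power homomorphism
`λ(ψ) = Λ²ψ` is exactly `SO⁺(Λ²ℤ⁴, b)`, where `b(x,y) = x ∧ y ∈ Λ⁴ℤ⁴ ≅ ℤ`. -/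
theorem stmt_12 :
    {g : Matrix (Fin 6) (Fin 6) ℤ |
        ∃ ψ : Matrix (Fin 4) (Fin 4) ℤ, ψ.det = 1 ∧ g = lam2 ψ} =
    {g : Matrix (Fin 6) (Fin 6) ℤ |
        IsIsometry G6 g ∧ g.det = 1 ∧ OrientPres G6 g} := by
  ext g
  simp only [Set.mem_ofPred_eq, lam2_eq_exteriorSquare, isIsometry_det_orientPres_iff]
  constructor
  · rintro ⟨ψ, hψ, rfl⟩
    exact map_exteriorSquare_mem_realSOPlus hψ
  · exact exists_eq_exteriorSquare_of_map_mem_realSOPlus
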